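/- arXiv:1605.06818 — 4 statements merged into one kernel-verified Lean document; each statement's English description precedes it below -/
import Mathlib

section
/- Let α > 0, σ > 0, and let h : [0,∞) → [0,∞) be a differentiable, strictly increasing function with h(0) = 0 and h(x) → ∞ as x → ∞, and let f(x) = h'(x) · h(x)^(α−1) · e^(−h(x)) / Γ(α) for x > 0. Let X have density f, and set Υ = h(X) e^(σ h(X)). Then for every x > 0, the cumulative distribution function of Υ satisfies F_Υ(x) = P{Υ < x} = F_X( h⁻( w/σ ) ), where w is the unique nonnegative real number with w e^w = σ x (the principal branch of the Lambert W function evaluated at σx), h⁻(y) = inf{ t ≥ 0 : h(t) ≥ y } is the generalized inverse of h, and F_X is the cumulative distribution function of X. -/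
open MeasureTheory Real Set

/-!
For `w ≥ 0` the condition `u e^u < w e^w` is equivalent to `u < w` for every real `u`, even a
negative one. With `u = σ h X` and `w e^w = σ x` it follows that `Υ < x` says exactly that
`h X < w / σ`. Where `h` is monotone and upper semicontinuous, the infimum defining `h⁻ y` is
attained, so `h⁻ y ≤ t` is equivalent to `y ≤ h t`, and `h X < w / σ` says that `X < h⁻ (w / σ)`.
-/

section GeneralizedInverse

variable {E β : Type*} [ConditionallyCompleteLinearOrder E] [LinearOrder β]

/-- The generalized inverse `h⁻ y = inf {t ≥ a : h t ≥ y}` of a function `h` considered on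
`[a, ∞)`. It is meaningful only when `h` reaches the level `y`; otherwise it is the junk value
`sInf ∅`. -/
noncomputable def generalizedInverse (a : E) (h : E → β) (y : β) : E :=
  sInf {t | a ≤ t ∧ y ≤ h t}

variable [TopologicalSpace E] [OrderTopology E] {a : E} {h : E → β} {y : β}

theorem isLeast_generalizedInverse (husc : UpperSemicontinuousOn h (Ici a))
    (hreach : ∃ t, a ≤ t ∧ y ≤ h t) :
    IsLeast {t | a ≤ t ∧ y ≤ h t} (generalizedInverse a h y) := by
  obtain ⟨v, hv_closed, hv⟩ := upperSemicontinuousOn_iff_preimage_Ici.1 husc y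
  have hclosed : IsClosed (Ici a ∩ h ⁻¹' Ici y) := hv ▸ isClosed_Ici.inter hv_closed
  exact hclosed.isLeast_csInf hreach ⟨a, fun _ ht => ht.1⟩

theorem generalizedInverse_le_iff (hmono : MonotoneOn h (Ici a))
    (husc : UpperSemicontinuousOn h (Ici a)) (hreach : ∃ t, a ≤ t ∧ y ≤ h t) {t : E}
    (ht : a ≤ t) : generalizedInverse a h y ≤ t ↔ y ≤ h t := by
  obtain ⟨⟨ha_le, hy_le⟩, hlower⟩ := isLeast_generalizedInverse husc hreach
  exact ⟨fun hle => hy_le.trans (hmono ha_le ht hle), fun hy => hlower ⟨ht, hy⟩⟩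

theorem measure_setOf_lt_eq_measure_Iio_generalizedInverse [MeasurableSpace E] {μ : Measure E}
    (hμ : ∀ᵐ t ∂μ, a ≤ t) (hmono : MonotoneOn h (Ici a))
    (husc : UpperSemicontinuousOn h (Ici a)) (hreach : ∃ t, a ≤ t ∧ y ≤ h t) :
    μ {t | h t < y} = μ (Iio (generalizedInverse a h y)) := by
  refine measure_congr (Filter.eventuallyEq_set.2 ?_)
  filter_upwards [hμ] with t ht
  exact (lt_iff_lt_of_le_iff_le (generalizedInverse_le_iff hmono husc hreach ht)).symm

end GeneralizedInverse

theorem mul_exp_lt_mul_exp_iff {u w : ℝ} (hw : 0 ≤ w) :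
    u * exp u < w * exp w ↔ u < w := by
  constructor
  · contrapose!
    intro hwu
    have hu : 0 ≤ u := hw.trans hwu
    gcongr
  · intro huw
    calc
      u * exp u < w * exp u := by gcongr
      _ ≤ w * exp w := by gcongr

theorem mul_exp_mul_lt_iff_lt_div {σ w x y : ℝ} (hσ : 0 < σ) (hw : 0 ≤ w)
    (hwx : w * exp w = σ * x) : y * exp (σ * y) < x ↔ y < w / σ := by
  calc
    y * exp (σ * y) < x ↔ σ * y * exp (σ * y) < w * exp w := by
      rw [hwx, mul_assoc, mul_lt_mul_iff_right₀ hσ]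
    _ ↔ σ * y < w := mul_exp_lt_mul_exp_iff hw
    _ ↔ y < w / σ := (lt_div_iff₀' hσ).symm

theorem ae_mem_withDensity_restrict {E : Type*} [MeasurableSpace E] {s : Set E}
    (hs : MeasurableSet s) (ν : Measure E) (ρ : E → ENNReal) :
    ∀ᵐ t ∂(ν.restrict s).withDensity ρ, t ∈ s :=
  (withDensity_absolutelyContinuous _ _).ae_le (ae_restrict_mem hs)

theorem GE_transformed_cdf_general {E : Type*} [ConditionallyCompleteLinearOrder E]
    [TopologicalSpace E] [OrderTopology E] [MeasurableSpace E] {μ : Measure E} {a : E}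
    (hμ : ∀ᵐ t ∂μ, a ≤ t) {h : E → ℝ} (hmono : MonotoneOn h (Ici a))
    (husc : UpperSemicontinuousOn h (Ici a)) {σ w x : ℝ} (hσ : 0 < σ) (hw : 0 ≤ w)
    (hwx : w * exp w = σ * x) (hreach : ∃ t, a ≤ t ∧ w / σ ≤ h t) :
    μ {t | h t * exp (σ * h t) < x} = μ (Iio (generalizedInverse a h (w / σ))) := by
  simp only [mul_exp_mul_lt_iff_lt_div hσ hw hwx]
  exact measure_setOf_lt_eq_measure_Iio_generalizedInverse hμ hmono husc hreach

/-- For `X ~ GE(α, h)` and `Υ = h(X) exp(σ h(X))` with `σ > 0`, the CDF of `Υ`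
satisfies `F_Υ(x) = F_X(h⁻(W_P(σx)/σ))` for every `x > 0`, where `W_P` is the principal
branch of the Lambert W function (the unique `w ≥ 0` with `w e^w = σx`) and
`h⁻(y) = inf {t ≥ 0 : h(t) ≥ y}` is the generalized inverse of `h`. -/
theorem GE_transformed_cdf (α σ : ℝ) (hα : 0 < α) (hσ : 0 < σ) (h h' : ℝ → ℝ)
    (hderiv : ∀ x ∈ Ici (0 : ℝ), HasDerivAt h (h' x) x)
    (hmono : StrictMonoOn h (Ici 0))
    (h0 : h 0 = 0)
    (htop : Filter.Tendsto h Filter.atTop Filter.atTop)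
    (f : ℝ → ℝ)
    (hf : ∀ x, 0 < x → f x = h' x * (h x) ^ (α - 1) * Real.exp (-(h x)) / Real.Gamma α)
    (μ : Measure ℝ)
    (hμ : μ = (volume.restrict (Ioi 0)).withDensity (fun x => ENNReal.ofReal (f x))) :
    ∀ x : ℝ, 0 < x → ∀ w : ℝ, 0 ≤ w → w * Real.exp w = σ * x →
      μ {t : ℝ | h t * Real.exp (σ * h t) < x} =
        μ (Iio (sInf {t : ℝ | 0 ≤ t ∧ w / σ ≤ h t})) := by
  intro x _ w hw hwx
  have hsupp : ∀ᵐ t ∂μ, 0 ≤ t :=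
    hμ ▸ (ae_mem_withDensity_restrict measurableSet_Ioi _ _).mono fun _ ht => le_of_lt ht
  have hreach : ∃ t, 0 ≤ t ∧ w / σ ≤ h t :=
    ((Filter.eventually_ge_atTop 0).and (htop.eventually_ge_atTop (w / σ))).exists
  exact GE_transformed_cdf_general hsupp hmono.monotoneOn
    (HasDerivAt.continuousOn hderiv).upperSemicontinuousOn hσ hw hwx hreach
end

section
/- Let α > 0, σ ≥ 0, and let h : [0,∞) → [0,∞) be a differentiable, strictly increasing function with h(0) = 0 and h(x) → ∞ as x → ∞, and let f(x) = h'(x) · h(x)^(α−1) · e^(−h(x)) / Γ(α) for x > 0. Then for every real s with −α < s and σ s < 1, one has E[ h(X)^s e^(σ s h(X)) ] = ∫₀^∞ h(x)^s e^(σ s h(x)) f(x) dx = Γ(α + s) / ( Γ(α) · (1 − σ s)^(α + s) ). -/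
open MeasureTheory Real Set

/-!
If `X` has the `GE(α, h)` density, then `h(X)` has the Gamma distribution with shape `α` and
rate `1`: that density is `h' · (γ ∘ h)`, with `γ` the Gamma density, so the substitution
`t = h x` turns an expectation of `g(h(X))` into one of `g` under the Gamma law. What remains is
an exponentially tilted moment of a Gamma law, which is Euler's integral with a shifted shape and
a shifted rate.
-/

open Filter ProbabilityTheory Topology

theorem le_of_monotoneOn_Ioi_of_tendsto_nhdsGT {X Y : Type*} [LinearOrder X]
    [DenselyOrdered X] [TopologicalSpace X] [OrderTopology X] [Preorder Y] [TopologicalSpace Y]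
    [ClosedIicTopology Y] {h : X → Y} {a x : X} {b : Y} (hmono : MonotoneOn h (Ioi a))
    (hbot : Tendsto h (𝓝[>] a) (𝓝 b)) (hx : a < x) : b ≤ h x := by
  have : (𝓝[>] a).NeBot := nhdsGT_neBot_of_exists_gt ⟨x, hx⟩
  refine le_of_tendsto hbot ?_
  filter_upwards [Ioo_mem_nhdsGT hx] with y hy
  exact hmono hy.1 hx hy.2.le

section ChangeOfVariables

variable {a b : ℝ} {h h' : ℝ → ℝ}

-- If `h` is constantly `b` near `a`, then its image is `Ici b` instead of `Ioi b`.
theorem image_Ioi_ae_eq_Ioi_of_monotoneOn (hmono : MonotoneOn h (Ioi a))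
    (hcont : ContinuousOn h (Ioi a)) (hbot : Tendsto h (𝓝[>] a) (𝓝 b))
    (htop : Tendsto h atTop atTop) : h '' Ioi a =ᵐ[volume] Ioi b := by
  have image_subset : h '' Ioi a ⊆ Ici b :=
    image_subset_iff.2 fun _ hx ↦ le_of_monotoneOn_Ioi_of_tendsto_nhdsGT hmono hbot hx
  have subset_image : Ioi b ⊆ h '' Ioi a :=
    isPreconnected_Ioi.intermediate_value_Ioi (l₁ := 𝓝[>] a) inf_le_right
      (le_principal_iff.2 (Ioi_mem_atTop a)) hcont hbot htop
  exact (image_subset.eventuallyLE.trans Ioi_ae_eq_Ici.symm.le).antisymm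
    subset_image.eventuallyLE

theorem integral_Ioi_deriv_smul_comp_of_monotoneOn {E : Type*} [NormedAddCommGroup E]
    [NormedSpace ℝ E] (hderiv : ∀ x ∈ Ioi a, HasDerivAt h (h' x) x)
    (hmono : MonotoneOn h (Ioi a)) (hbot : Tendsto h (𝓝[>] a) (𝓝 b))
    (htop : Tendsto h atTop atTop) (g : ℝ → E) :
    ∫ x in Ioi a, h' x • g (h x) = ∫ t in Ioi b, g t := by
  have hcont : ContinuousOn h (Ioi a) := HasDerivAt.continuousOn hderiv
  rw [← setIntegral_congr_set (image_Ioi_ae_eq_Ioi_of_monotoneOn hmono hcont hbot htop),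
    integral_image_eq_integral_deriv_smul_of_monotoneOn measurableSet_Ioi
      (fun x hx ↦ (hderiv x hx).hasDerivWithinAt) hmono]

end ChangeOfVariables

section GammaLaw

variable {a r : ℝ}

theorem gammaPDFReal_of_nonneg {x : ℝ} (hx : 0 ≤ x) :
    gammaPDFReal a r x = r ^ a / Gamma a * x ^ (a - 1) * exp (-(r * x)) :=
  if_pos hx

theorem integral_gammaMeasure_eq_integral_Ioi {E : Type*} [NormedAddCommGroup E]
    [NormedSpace ℝ E] (ha : 0 < a) (hr : 0 < r) (g : ℝ → E) :
    ∫ t, g t ∂gammaMeasure a r = ∫ t in Ioi 0, gammaPDFReal a r t • g t := by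
  have toReal_gammaPDF (t : ℝ) : (gammaPDF a r t).toReal = gammaPDFReal a r t :=
    ENNReal.toReal_ofReal (gammaPDFReal_nonneg ha hr t)
  have vanish_off_Ici (t : ℝ) (ht : t ∉ Ici 0) : gammaPDFReal a r t • g t = 0 := by
    rw [gammaPDFReal, if_neg (notMem_Ici.1 ht).not_ge, zero_smul]
  have measurable_gammaPDF : Measurable (gammaPDF a r) :=
    (measurable_gammaPDFReal a r).ennreal_ofReal
  rw [gammaMeasure, integral_withDensity_eq_integral_toReal_smul measurable_gammaPDF
    (ae_of_all _ fun _ ↦ ENNReal.ofReal_lt_top)]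
  simp only [toReal_gammaPDF]
  rw [← integral_Ici_eq_integral_Ioi,
    setIntegral_eq_integral_of_forall_compl_eq_zero vanish_off_Ici]

theorem integral_rpow_mul_exp_mul_gammaMeasure {s c : ℝ} (ha : 0 < a) (hr : 0 < r)
    (hs : -a < s) (hc : c < r) :
    ∫ t, t ^ s * exp (c * t) ∂gammaMeasure a r =
      r ^ a * Gamma (a + s) / (Gamma a * (r - c) ^ (a + s)) := by
  have tilted_density : ∀ t ∈ Ioi (0 : ℝ), gammaPDFReal a r t • (t ^ s * exp (c * t)) =
      r ^ a / Gamma a * (t ^ (a + s - 1) * exp (-((r - c) * t))) := by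
    intro t (ht : 0 < t)
    have rpow_split : t ^ (a + s - 1) = t ^ (a - 1) * t ^ s := by
      rw [← rpow_add ht, sub_add_eq_add_sub]
    have exp_split : exp (-((r - c) * t)) = exp (-(r * t)) * exp (c * t) := by
      rw [← exp_add]
      ring_nf
    rw [gammaPDFReal_of_nonneg ht.le, rpow_split, exp_split, smul_eq_mul]
    ring
  calc
    _ = r ^ a / Gamma a * ∫ t in Ioi 0, t ^ (a + s - 1) * exp (-((r - c) * t)) := by
      rw [integral_gammaMeasure_eq_integral_Ioi ha hr,
        setIntegral_congr_fun measurableSet_Ioi tilted_density, integral_const_mul]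
    _ = r ^ a / Gamma a * ((1 / (r - c)) ^ (a + s) * Gamma (a + s)) := by
      rw [integral_rpow_mul_exp_neg_mul_Ioi (neg_lt_iff_pos_add'.1 hs) (sub_pos.2 hc)]
    _ = _ := by
      rw [one_div, inv_rpow (sub_pos.2 hc).le]
      ring

theorem integral_deriv_mul_gammaPDFReal_smul_comp {E : Type*} [NormedAddCommGroup E]
    [NormedSpace ℝ E] {h h' : ℝ → ℝ} {x₀ : ℝ} (ha : 0 < a) (hr : 0 < r)
    (hderiv : ∀ x ∈ Ioi x₀, HasDerivAt h (h' x) x) (hmono : MonotoneOn h (Ioi x₀))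
    (hbot : Tendsto h (𝓝[>] x₀) (𝓝 0)) (htop : Tendsto h atTop atTop) (g : ℝ → E) :
    ∫ x in Ioi x₀, (h' x * gammaPDFReal a r (h x)) • g (h x) =
      ∫ t, g t ∂gammaMeasure a r := by
  simp only [mul_smul]
  rw [integral_gammaMeasure_eq_integral_Ioi ha hr,
    integral_Ioi_deriv_smul_comp_of_monotoneOn hderiv hmono hbot htop
      fun t ↦ gammaPDFReal a r t • g t]

end GammaLaw

theorem GE_exp_moment_general {α s c : ℝ} {h h' f : ℝ → ℝ} (hα : 0 < α)
    (hderiv : ∀ x ∈ Ioi 0, HasDerivAt h (h' x) x) (hmono : MonotoneOn h (Ioi 0))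
    (hbot : Tendsto h (𝓝[>] 0) (𝓝 0)) (htop : Tendsto h atTop atTop)
    (hf : ∀ x, 0 < x → f x = h' x * h x ^ (α - 1) * exp (-(h x)) / Gamma α)
    (hs : -α < s) (hc : c < 1) :
    ∫ x in Ioi 0, h x ^ s * exp (c * h x) * f x =
      Gamma (α + s) / (Gamma α * (1 - c) ^ (α + s)) := by
  have density_eq : ∀ x ∈ Ioi (0 : ℝ), f x = h' x * gammaPDFReal α 1 (h x) := by
    intro x hx
    rw [hf x hx,
      gammaPDFReal_of_nonneg (le_of_monotoneOn_Ioi_of_tendsto_nhdsGT hmono hbot hx),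
      one_rpow, one_mul]
    ring
  calc
    _ = ∫ x in Ioi 0, (h' x * gammaPDFReal α 1 (h x)) • (h x ^ s * exp (c * h x)) :=
      setIntegral_congr_fun measurableSet_Ioi fun x hx ↦ by
        simp only [density_eq x hx, smul_eq_mul, mul_comm]
    _ = ∫ t, t ^ s * exp (c * t) ∂gammaMeasure α 1 :=
      integral_deriv_mul_gammaPDFReal_smul_comp hα one_pos hderiv hmono hbot htop
        fun t ↦ t ^ s * exp (c * t)
    _ = _ := by
      rw [integral_rpow_mul_exp_mul_gammaMeasure hα one_pos hs hc, one_rpow, one_mul]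

/-- For `X ~ GE(α, h)`, `σ ≥ 0` and `-α < s` with `σ s < 1`,
`E[h(X)^s exp(σ s h(X))] = Γ(α+s) / (Γ(α) (1 - σ s)^(α+s))`. -/
theorem GE_exp_moment (α σ : ℝ) (hα : 0 < α) (hσ : 0 ≤ σ) (h h' : ℝ → ℝ)
    (hderiv : ∀ x ∈ Ici (0 : ℝ), HasDerivAt h (h' x) x)
    (hmono : StrictMonoOn h (Ici 0))
    (h0 : h 0 = 0)
    (htop : Filter.Tendsto h Filter.atTop Filter.atTop)
    (f : ℝ → ℝ)
    (hf : ∀ x, 0 < x → f x = h' x * (h x) ^ (α - 1) * Real.exp (-(h x)) / Real.Gamma α) :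
    ∀ s : ℝ, -α < s → σ * s < 1 →
      ∫ x in Ioi (0 : ℝ), (h x) ^ s * Real.exp (σ * s * h x) * f x =
        Real.Gamma (α + s) / (Real.Gamma α * (1 - σ * s) ^ (α + s)) := by
  have hbot : Tendsto h (𝓝[>] 0) (𝓝 0) := by
    simpa only [h0] using (hderiv 0 self_mem_Ici).continuousAt.continuousWithinAt.tendsto
  exact fun s ↦ GE_exp_moment_general hα (fun x hx ↦ hderiv x (Ioi_subset_Ici_self hx))
    (hmono.monotoneOn.mono Ioi_subset_Ici_self) hbot htop hf
end

section
/- Let λ, β, k, α > 0 with k ≥ 1, and let f(x) = (λ + β k x^(k−1)) · e^(−λx − βx^k) · (λx + βx^k)^(α−1) / Γ(α) for x > 0. Then for every real s with s > −α, one has E[(λX + βX^k)^s] = ∫₀^∞ (λx + βx^k)^s f(x) dx = Γ(α + s)/Γ(α). In particular, for s = 1, λ·E[X] + β·E[X^k] = α. -/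
open MeasureTheory Real Set

/-!
The function `H x = λ x + β x ^ k` is the cumulative hazard of the exponential-Weibull law and
`λ + β k x ^ (k - 1)` is its derivative, so the GEEW density is the pullback under `H` of the Gamma
density `e ^ (-y) y ^ (α - 1) / Γ(α)`. As `H` maps `(0, ∞)` increasingly onto itself, the
substitution `y = H x` turns the `s`-th moment of `H(X)` into `Γ(α + s) / Γ(α)`. The case `s = 1`
splits into two integrals because both summands of `H` are nonnegative.
-/

open Filter

section GammaG

/-- The density of the Gamma-G (Zografos–Balakrishnan) family: the pullback, under a baseline
cumulative hazard `H` with hazard rate `h = H'`, of the Gamma density of shape `α` and rate `1`.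
The relation between `H` and `h` is not part of the definition. -/
noncomputable def gammaGPDF (α : ℝ) (H h : ℝ → ℝ) (x : ℝ) : ℝ :=
  h x * exp (-H x) * H x ^ (α - 1) / Gamma α

variable {α s x : ℝ} {H h : ℝ → ℝ} {S : Set ℝ}

lemma rpow_mul_gammaGPDF (hx : 0 < H x) :
    H x ^ s * gammaGPDF α H h x = h x • (exp (-H x) * H x ^ (α + s - 1) / Gamma α) := by
  rw [gammaGPDF, smul_eq_mul, show α + s - 1 = s + (α - 1) by ring, rpow_add hx]
  ring

lemma integrableOn_rpow_mul_gammaGPDF (hS : MeasurableSet S)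
    (hderiv : ∀ x ∈ S, HasDerivWithinAt H (h x) S x) (hmono : MonotoneOn H S)
    (himage : H '' S = Ioi 0) (hs : -α < s) :
    IntegrableOn (fun x => H x ^ s * gammaGPDF α H h x) S := by
  have hgamma : IntegrableOn (fun y => exp (-y) * y ^ (α + s - 1) / Gamma α) (H '' S) := by
    rw [himage]
    exact (GammaIntegral_convergent (by linarith)).div_const _
  rw [integrableOn_image_iff_integrableOn_deriv_smul_of_monotoneOn hS hderiv hmono] at hgamma
  exact hgamma.congr_fun
    (fun x hx => (rpow_mul_gammaGPDF (himage.subset (mem_image_of_mem H hx))).symm) hS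

lemma setIntegral_rpow_mul_gammaGPDF (hS : MeasurableSet S)
    (hderiv : ∀ x ∈ S, HasDerivWithinAt H (h x) S x) (hmono : MonotoneOn H S)
    (himage : H '' S = Ioi 0) (hs : -α < s) :
    ∫ x in S, H x ^ s * gammaGPDF α H h x = Gamma (α + s) / Gamma α :=
  calc ∫ x in S, H x ^ s * gammaGPDF α H h x
      = ∫ x in S, h x • (exp (-H x) * H x ^ (α + s - 1) / Gamma α) :=
        setIntegral_congr_fun hS fun x hx =>
          rpow_mul_gammaGPDF (himage.subset (mem_image_of_mem H hx))
    _ = ∫ y in Ioi 0, exp (-y) * y ^ (α + s - 1) / Gamma α := by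
        rw [← himage, integral_image_eq_integral_deriv_smul_of_monotoneOn hS hderiv hmono]
    _ = Gamma (α + s) / Gamma α := by
        rw [integral_div, ← Gamma_eq_integral (by linarith)]

end GammaG

section ExpWeibull

/-- The cumulative hazard of the exponential-Weibull law, whose survival function is
`exp (-(lam * x + β * x ^ k))`. -/
noncomputable def expWeibullCumHazard (lam β k x : ℝ) : ℝ :=
  lam * x + β * x ^ k

/-- The hazard rate of the exponential-Weibull law. -/
noncomputable def expWeibullHazard (lam β k x : ℝ) : ℝ :=
  lam + β * k * x ^ (k - 1)

variable {lam β k x : ℝ}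

lemma hasDerivAt_expWeibullCumHazard (hx : x ≠ 0) :
    HasDerivAt (expWeibullCumHazard lam β k) (expWeibullHazard lam β k x) x := by
  rw [expWeibullHazard, mul_assoc]
  exact (hasDerivAt_const_mul lam).add ((hasDerivAt_rpow_const (Or.inl hx)).const_mul β)

lemma continuous_expWeibullCumHazard (hk : 0 ≤ k) :
    Continuous (expWeibullCumHazard lam β k) :=
  (continuous_const_mul lam).add ((continuous_rpow_const hk).const_mul β)

lemma expWeibullCumHazard_zero (hk : k ≠ 0) : expWeibullCumHazard lam β k 0 = 0 := by
  simp [expWeibullCumHazard, zero_rpow hk]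

lemma expWeibullHazard_nonneg (hlam : 0 ≤ lam) (hβ : 0 ≤ β) (hk : 0 ≤ k) (hx : 0 ≤ x) :
    0 ≤ expWeibullHazard lam β k x := by
  unfold expWeibullHazard
  positivity

lemma strictMonoOn_expWeibullCumHazard (hlam : 0 ≤ lam) (hβ : 0 ≤ β) (hpos : 0 < lam ∨ 0 < β)
    (hk : 0 < k) : StrictMonoOn (expWeibullCumHazard lam β k) (Ici 0) := by
  intro x hx y _ hxy
  have hpow : x ^ k < y ^ k := rpow_lt_rpow hx hxy hk
  rcases hpos with hlam' | hβ'
  · exact add_lt_add_of_lt_of_le (by gcongr) (by gcongr)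
  · exact add_lt_add_of_le_of_lt (by gcongr) (by gcongr)

lemma tendsto_expWeibullCumHazard_atTop (hlam : 0 ≤ lam) (hβ : 0 ≤ β) (hpos : 0 < lam ∨ 0 < β)
    (hk : 0 < k) : Tendsto (expWeibullCumHazard lam β k) atTop atTop := by
  rcases hpos with hlam' | hβ'
  · refine tendsto_atTop_mono' _ ?_ (tendsto_id.const_mul_atTop hlam')
    filter_upwards [eventually_ge_atTop 0] with x hx
    exact le_add_of_nonneg_right (by positivity)
  · refine tendsto_atTop_mono' _ ?_ ((tendsto_rpow_atTop hk).const_mul_atTop hβ')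
    filter_upwards [eventually_ge_atTop 0] with x hx
    exact le_add_of_nonneg_left (by positivity)

lemma image_expWeibullCumHazard_Ioi (hlam : 0 ≤ lam) (hβ : 0 ≤ β) (hpos : 0 < lam ∨ 0 < β)
    (hk : 0 < k) : expWeibullCumHazard lam β k '' Ioi 0 = Ioi 0 := by
  simpa only [expWeibullCumHazard_zero hk.ne'] using
    (continuous_expWeibullCumHazard hk.le).continuousOn.image_Ioi_of_strictMonoOn
      (strictMonoOn_expWeibullCumHazard hlam hβ hpos hk)
      (tendsto_expWeibullCumHazard_atTop hlam hβ hpos hk)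

end ExpWeibull

section GEEW

/-- The GEEW density, as the member of the Gamma-G family with exponential-Weibull baseline. -/
noncomputable def geewPDF (lam β k α : ℝ) : ℝ → ℝ :=
  gammaGPDF α (expWeibullCumHazard lam β k) (expWeibullHazard lam β k)

variable {lam β k α s x : ℝ}

lemma measurable_geewPDF : Measurable (geewPDF lam β k α) := by
  unfold geewPDF gammaGPDF expWeibullCumHazard expWeibullHazard
  fun_prop

lemma geewPDF_nonneg (hlam : 0 ≤ lam) (hβ : 0 ≤ β) (hk : 0 ≤ k) (hα : 0 < α) (hx : 0 ≤ x) :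
    0 ≤ geewPDF lam β k α x := by
  have hhazard := expWeibullHazard_nonneg hlam hβ hk hx
  have hcum : 0 ≤ expWeibullCumHazard lam β k x := by
    unfold expWeibullCumHazard
    positivity
  unfold geewPDF gammaGPDF
  positivity

lemma integrableOn_rpow_mul_geewPDF (hlam : 0 ≤ lam) (hβ : 0 ≤ β) (hpos : 0 < lam ∨ 0 < β)
    (hk : 0 < k) (hs : -α < s) :
    IntegrableOn (fun x => (lam * x + β * x ^ k) ^ s * geewPDF lam β k α x) (Ioi 0) :=
  integrableOn_rpow_mul_gammaGPDF measurableSet_Ioi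
    (fun _ hx => (hasDerivAt_expWeibullCumHazard (ne_of_gt hx)).hasDerivWithinAt)
    ((strictMonoOn_expWeibullCumHazard hlam hβ hpos hk).monotoneOn.mono Ioi_subset_Ici_self)
    (image_expWeibullCumHazard_Ioi hlam hβ hpos hk) hs

lemma setIntegral_rpow_mul_geewPDF (hlam : 0 ≤ lam) (hβ : 0 ≤ β) (hpos : 0 < lam ∨ 0 < β)
    (hk : 0 < k) (hs : -α < s) :
    ∫ x in Ioi 0, (lam * x + β * x ^ k) ^ s * geewPDF lam β k α x = Gamma (α + s) / Gamma α :=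
  setIntegral_rpow_mul_gammaGPDF measurableSet_Ioi
    (fun _ hx => (hasDerivAt_expWeibullCumHazard (ne_of_gt hx)).hasDerivWithinAt)
    ((strictMonoOn_expWeibullCumHazard hlam hβ hpos hk).monotoneOn.mono Ioi_subset_Ici_self)
    (image_expWeibullCumHazard_Ioi hlam hβ hpos hk) hs

lemma mul_setIntegral_add_mul_setIntegral_geewPDF (hlam : 0 ≤ lam) (hβ : 0 ≤ β)
    (hpos : 0 < lam ∨ 0 < β) (hk : 0 < k) (hα : 0 < α) :
    (lam * ∫ x in Ioi 0, x * geewPDF lam β k α x) +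
      (β * ∫ x in Ioi 0, x ^ k * geewPDF lam β k α x) = α := by
  have hmoment := setIntegral_rpow_mul_geewPDF hlam hβ hpos hk (show -α < 1 by linarith)
  have hint := integrableOn_rpow_mul_geewPDF hlam hβ hpos hk (show -α < 1 by linarith)
  simp only [rpow_one, add_mul, mul_assoc] at hmoment hint
  have hmeas : Measurable fun x => lam * (x * geewPDF lam β k α x) :=
    (measurable_id.mul measurable_geewPDF).const_mul lam
  have hlin_nonneg : 0 ≤ᵐ[volume.restrict (Ioi 0)] fun x => lam * (x * geewPDF lam β k α x) := by
    filter_upwards [ae_restrict_mem measurableSet_Ioi] with x (hx : 0 < x)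
    exact mul_nonneg hlam (mul_nonneg hx.le (geewPDF_nonneg hlam hβ hk.le hα hx.le))
  have hpow_nonneg :
      0 ≤ᵐ[volume.restrict (Ioi 0)] fun x => β * (x ^ k * geewPDF lam β k α x) := by
    filter_upwards [ae_restrict_mem measurableSet_Ioi] with x (hx : 0 < x)
    exact mul_nonneg hβ (mul_nonneg (by positivity) (geewPDF_nonneg hlam hβ hk.le hα hx.le))
  obtain ⟨hlin, hpow⟩ :=
    (integrable_add_iff_of_nonneg hmeas.aestronglyMeasurable hlin_nonneg hpow_nonneg).1 hint
  rw [← integral_const_mul, ← integral_const_mul, ← integral_add hlin hpow, hmoment,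
    Gamma_add_one hα.ne', mul_div_cancel_right₀ _ (Gamma_pos_of_pos hα).ne']

end GEEW

theorem GEEW_moment_general (lam β k α : ℝ)
    (hlam : 0 ≤ lam) (hβ : 0 ≤ β) (hpos : 0 < lam ∨ 0 < β) (hk : 0 < k) (hα : 0 < α)
    (f : ℝ → ℝ)
    (hf : ∀ x, 0 < x →
      f x = (lam + β * k * x ^ (k - 1)) * Real.exp (-(lam * x) - β * x ^ k) *
            (lam * x + β * x ^ k) ^ (α - 1) / Real.Gamma α) :
    (∀ s : ℝ, -α < s →
      ∫ x in Ioi (0 : ℝ), (lam * x + β * x ^ k) ^ s * f x =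
        Real.Gamma (α + s) / Real.Gamma α) ∧
    (lam * ∫ x in Ioi (0 : ℝ), x * f x) + (β * ∫ x in Ioi (0 : ℝ), x ^ k * f x) = α := by
  have hf_eq : EqOn f (geewPDF lam β k α) (Ioi 0) := fun x hx => by
    rw [hf x hx, ← neg_add']
    rfl
  have hcongr (u : ℝ → ℝ) :
      ∫ x in Ioi 0, u x * f x = ∫ x in Ioi 0, u x * geewPDF lam β k α x :=
    setIntegral_congr_fun measurableSet_Ioi fun x hx => congrArg (u x * ·) (hf_eq hx)
  simp only [hcongr]
  exact ⟨fun s hs => setIntegral_rpow_mul_geewPDF hlam hβ hpos hk hs,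
    mul_setIntegral_add_mul_setIntegral_geewPDF hlam hβ hpos hk hα⟩

/-- For `X ~ GEEW(λ, β, k, α)` and `s > -α`,
`E[(λX + βX^k)^s] = Γ(α+s)/Γ(α)`; in particular `λ E[X] + β E[X^k] = α`. -/
theorem GEEW_moment (lam β k α : ℝ)
    (hlam : 0 < lam) (hβ : 0 < β) (hk0 : 0 < k) (hk : 1 ≤ k) (hα : 0 < α)
    (f : ℝ → ℝ)
    (hf : ∀ x, 0 < x →
      f x = (lam + β * k * x ^ (k - 1)) * Real.exp (-(lam * x) - β * x ^ k) *
            (lam * x + β * x ^ k) ^ (α - 1) / Real.Gamma α) :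
    (∀ s : ℝ, -α < s →
      ∫ x in Ioi (0 : ℝ), (lam * x + β * x ^ k) ^ s * f x =
        Real.Gamma (α + s) / Real.Gamma α) ∧
    (lam * ∫ x in Ioi (0 : ℝ), x * f x) + (β * ∫ x in Ioi (0 : ℝ), x ^ k * f x) = α :=
  GEEW_moment_general lam β k α hlam.le hβ.le (Or.inl hlam) hk0 hα f hf
end

section
/- Let μ, a, ν, ρ be positive real numbers such that ρ + (ℓ + μ)/ν is not a positive integer for any nonnegative integer ℓ. Then the integral I_μ(a, ν, ρ) = ∫₀^∞ x^(μ−1) (1 + a x^ν)^ρ e^(−x) dx equals the convergent series Σ_{n≥0} ( (−1)^n (−ρ)_n / n! ) · { a^n · γ(μ + νn, a^(−1/ν)) + a^(ρ−n) · Γ(μ + ν(ρ − n), a^(−1/ν)) }, where (−ρ)_n = (−ρ)(−ρ+1)⋯(−ρ+n−1) is the Pochhammer symbol. -/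
open MeasureTheory Real Set

/-- Pochhammer symbol `(c)_n = c (c+1) ⋯ (c+n-1)`. -/
noncomputable def poch (c : ℝ) (n : ℕ) : ℝ := ∏ i ∈ Finset.range n, (c + i)

/-- Lower incomplete Gamma function `γ(s, z) = ∫₀^z t^(s-1) e^(-t) dt`. -/
noncomputable def lowerIncGamma (s z : ℝ) : ℝ := ∫ t in Ioc (0 : ℝ) z, t ^ (s - 1) * Real.exp (-t)

/-- Upper incomplete Gamma function `Γ(s, z) = ∫_z^∞ t^(s-1) e^(-t) dt`. -/
noncomputable def upperIncGamma (s z : ℝ) : ℝ := ∫ t in Ioi z, t ^ (s - 1) * Real.exp (-t)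

/-!
Put `z = a ^ (-1 / ν)`, so that `a * x ^ ν` is less than `1` for `x < z` and greater than `1` for
`x > z`. Expand `(1 + a * x ^ ν) ^ ρ` by the binomial series in `a * x ^ ν` on `(0, z]` and in its
inverse on `(z, ∞)`, and integrate term by term: the two halves of the `n`-th term are the lower
and the upper incomplete Gamma function. The exchange is justified by absolute convergence. Both
halves are nonnegative and `O(1 / (n + 1))`, while
`Ring.choose ρ n / (n + 1) = Ring.choose (ρ + 1) (n + 1) / (ρ + 1)`
is absolutely summable as soon as `ρ + 1 > 0`, by a telescoping argument.
-/

section BinomialCoefficients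

lemma succ_mul_choose_succ {R : Type*} [Ring R] [BinomialRing R] (r : R) (n : ℕ) :
    ((n : R) + 1) * Ring.choose r (n + 1) = Ring.choose r n * (r - n) := by
  simpa [Ring.choose_one_right] using Ring.choose_smul_choose r n.le_succ

lemma succ_mul_choose_add_one_succ {R : Type*} [Ring R] [BinomialRing R] (r : R) (n : ℕ) :
    ((n : R) + 1) * Ring.choose (r + 1) (n + 1) = (r + 1) * Ring.choose r n := by
  simpa [Ring.choose_one_right] using Ring.choose_smul_choose (r + 1) (Nat.le_add_left 1 n)

lemma choose_eq_neg_one_pow_mul_poch_div_factorial (r : ℝ) (n : ℕ) :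
    Ring.choose r n = (-1) ^ n * poch (-r) n / n.factorial := by
  induction n with
  | zero => simp [poch]
  | succ n ih =>
    have hrec := succ_mul_choose_succ r n
    rw [ih] at hrec
    have hfact : (n.factorial : ℝ) ≠ 0 := by positivity
    have hsucc : (n : ℝ) + 1 ≠ 0 := by positivity
    simp only [poch, Finset.prod_range_succ, Nat.factorial_succ] at hrec ⊢
    push_cast
    field_simp at hrec ⊢
    linear_combination hrec

lemma mul_abs_choose_eq_sub {r : ℝ} {n : ℕ} (hn : r ≤ n) :
    r * |Ring.choose r n| = n * |Ring.choose r n| - (n + 1) * |Ring.choose r (n + 1)| := by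
  have hrec := congrArg abs (succ_mul_choose_succ r n)
  rw [abs_mul, abs_mul, abs_of_nonneg (by positivity), abs_of_nonpos (sub_nonpos.2 hn)] at hrec
  linear_combination hrec

lemma summable_abs_choose {r : ℝ} (hr : 0 < r) : Summable fun n : ℕ => |Ring.choose r n| := by
  set N := ⌈r⌉₊
  let w : ℕ → ℝ := fun k => (k + N : ℕ) * |Ring.choose r (k + N)|
  have htelescope (k : ℕ) : r * |Ring.choose r (k + N)| = w k - w (k + 1) := by
    have hk : r ≤ (k + N : ℕ) := (Nat.le_ceil r).trans (by simp [N])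
    rw [mul_abs_choose_eq_sub hk]
    simp only [w, add_right_comm k 1 N, Nat.cast_add_one]
  rw [← summable_nat_add_iff N]
  refine summable_of_sum_range_le (c := w 0 / r) (fun _ => abs_nonneg _) fun n => ?_
  have hwn : 0 ≤ w n := by positivity
  rw [le_div_iff₀' hr, Finset.mul_sum, Finset.sum_congr rfl fun k _ => htelescope k,
    Finset.sum_range_sub']
  linarith

lemma summable_abs_choose_div_succ {r : ℝ} (hr : -1 < r) :
    Summable fun n : ℕ => |Ring.choose r n| / (n + 1) := by
  have hr' : 0 < r + 1 := by linarith
  have hshift := ((summable_nat_add_iff 1).2 (summable_abs_choose hr')).div_const (r + 1)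
  refine hshift.congr fun n => ?_
  have hrec := congrArg abs (succ_mul_choose_add_one_succ r n)
  rw [abs_mul, abs_mul, abs_of_pos hr', abs_of_nonneg (by positivity)] at hrec
  rw [div_eq_div_iff hr'.ne' (by positivity)]
  linear_combination hrec

lemma summable_abs_choose_mul {r C : ℝ} (hr : -1 < r) {u : ℕ → ℝ} (hu_nonneg : ∀ n, 0 ≤ u n)
    (hu_le : ∀ n, u n ≤ C / (n + 1)) : Summable fun n => |Ring.choose r n| * u n := by
  refine ((summable_abs_choose_div_succ hr).mul_left C).of_nonneg_of_le
    (fun n => mul_nonneg (abs_nonneg _) (hu_nonneg n)) fun n => ?_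
  calc |Ring.choose r n| * u n ≤ |Ring.choose r n| * (C / (n + 1)) := by gcongr; exact hu_le n
    _ = C * (|Ring.choose r n| / (n + 1)) := by ring

lemma hasSum_choose_mul_pow (r : ℝ) {y : ℝ} (hy : |y| < 1) :
    HasSum (fun n => Ring.choose r n * y ^ n) ((1 + y) ^ r) := by
  have hball : y ∈ Metric.eball (0 : ℝ) 1 := by
    rw [← ENNReal.ofReal_one, Metric.eball_ofReal]
    simpa using hy
  simpa only [binomialSeries_apply, List.ofFn_const, List.prod_replicate, smul_eq_mul, zero_add]
    using (one_add_rpow_hasFPowerSeriesOnBall_zero (a := r)).hasSum hball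

lemma hasSum_choose_mul_rpow_sub (r : ℝ) {y : ℝ} (hy : 1 < y) :
    HasSum (fun n : ℕ => Ring.choose r n * y ^ (r - n)) ((1 + y) ^ r) := by
  have hy_pos : 0 < y := one_pos.trans hy
  have hinv : |y⁻¹| < 1 := by
    rw [abs_of_pos (inv_pos.2 hy_pos)]
    exact inv_lt_one_of_one_lt₀ hy
  have hfactor : (1 + y) ^ r = y ^ r * (1 + y⁻¹) ^ r := by
    rw [← mul_rpow hy_pos.le (by positivity), mul_add, mul_one, mul_inv_cancel₀ hy_pos.ne',
      add_comm]
  rw [hfactor]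
  refine ((hasSum_choose_mul_pow r hinv).mul_left (y ^ r)).congr_fun fun n => ?_
  rw [rpow_sub hy_pos, rpow_natCast, inv_pow]
  ring

end BinomialCoefficients

lemma hasSum_mul_integral_of_nonneg {ι α : Type*} [Countable ι] [MeasurableSpace α]
    {m : Measure α} {c : ι → ℝ} {g : ι → α → ℝ} {f : α → ℝ} (hg : ∀ i, Integrable (g i) m)
    (hg_nonneg : ∀ i, 0 ≤ᵐ[m] g i) (hsum : Summable fun i => |c i| * ∫ x, g i x ∂m)
    (hf : ∀ᵐ x ∂m, HasSum (fun i => c i * g i x) (f x)) :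
    HasSum (fun i => c i * ∫ x, g i x ∂m) (∫ x, f x ∂m) := by
  have hnorm (i : ι) : ∫ x, ‖c i * g i x‖ ∂m = |c i| * ∫ x, g i x ∂m := by
    rw [← integral_const_mul]
    refine integral_congr_ae ?_
    filter_upwards [hg_nonneg i] with x hx
    rw [norm_mul, norm_of_nonneg hx, norm_eq_abs]
  have htsum : ∫ x, ∑' i, c i * g i x ∂m = ∫ x, f x ∂m :=
    integral_congr_ae (hf.mono fun _ hx => hx.tsum_eq)
  rw [← htsum]
  simpa only [integral_const_mul] using hasSum_integral_of_summable_integral_norm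
    (fun i => (hg i).const_mul (c i)) (by simpa only [hnorm] using hsum)

section IncompleteGamma

variable {s t z : ℝ}

lemma integrableOn_Ioi_zero_rpow_sub_one_mul_exp_neg (hs : 0 < s) :
    IntegrableOn (fun x => x ^ (s - 1) * exp (-x)) (Ioi 0) := by
  simpa only [mul_comm] using GammaIntegral_convergent hs

lemma integrableOn_Ioi_rpow_mul_exp_neg (s : ℝ) (hz : 0 < z) :
    IntegrableOn (fun x => x ^ s * exp (-x)) (Ioi z) := by
  have hcont : ContinuousOn (fun x => x ^ s * exp (-x)) (Ici z) := fun x hx =>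
    ((continuousAt_rpow_const x s (Or.inl (hz.trans_le hx).ne')).mul
      (by fun_prop)).continuousWithinAt
  refine integrable_of_isBigO_exp_neg one_half_pos hcont ?_
  simpa only [mul_comm] using (Gamma_integrand_isLittleO s).isBigO

lemma lowerIncGamma_nonneg (s z : ℝ) : 0 ≤ lowerIncGamma s z :=
  setIntegral_nonneg measurableSet_Ioc fun _ hx =>
    mul_nonneg (rpow_nonneg hx.1.le _) (exp_pos _).le

lemma upperIncGamma_nonneg (s : ℝ) (hz : 0 ≤ z) : 0 ≤ upperIncGamma s z :=
  setIntegral_nonneg measurableSet_Ioi fun _ hx =>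
    mul_nonneg (rpow_nonneg (hz.trans_lt hx).le _) (exp_pos _).le

lemma lowerIncGamma_le (hs : 0 < s) (hz : 0 ≤ z) : lowerIncGamma s z ≤ z ^ s / s := by
  have hint : IntegrableOn (fun x : ℝ => x ^ (s - 1)) (Ioc 0 z) :=
    (intervalIntegrable_iff_integrableOn_Ioc_of_le hz).1
      (intervalIntegral.intervalIntegrable_rpow' (by linarith))
  calc lowerIncGamma s z ≤ ∫ x in Ioc 0 z, x ^ (s - 1) := by
        refine setIntegral_mono_on
          ((integrableOn_Ioi_zero_rpow_sub_one_mul_exp_neg hs).mono_set Ioc_subset_Ioi_self)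
          hint measurableSet_Ioc fun x hx => ?_
        exact mul_le_of_le_one_right (rpow_nonneg hx.1.le _)
          (exp_le_one_iff.2 (neg_nonpos.2 hx.1.le))
    _ = z ^ s / s := by
        rw [← intervalIntegral.integral_of_le hz, integral_rpow (Or.inl (by linarith)),
          sub_add_cancel, zero_rpow hs.ne', sub_zero]

lemma rpow_mul_exp_neg_le {x : ℝ} (hs : 0 < s) (hx : 0 ≤ x) : x ^ s * exp (-x) ≤ s ^ s := by
  have hroot : x / s ≤ exp (x / s) := by linarith [add_one_le_exp (x / s)]
  have hpow : (x / s) ^ s ≤ exp x := by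
    calc (x / s) ^ s ≤ exp (x / s) ^ s := by gcongr
      _ = exp x := by rw [← exp_mul, div_mul_cancel₀ _ hs.ne']
  rw [div_rpow hx hs.le, div_le_iff₀ (by positivity)] at hpow
  rw [exp_neg, ← div_eq_mul_inv, div_le_iff₀ (exp_pos x)]
  linarith

lemma upperIncGamma_sub_le (hs : 0 < s) (ht : 0 < t) (hz : 0 < z) :
    upperIncGamma (s - t) z ≤ s ^ s * (z ^ (-t) / t) := by
  have htail : -t - 1 < -1 := by linarith
  calc upperIncGamma (s - t) z ≤ ∫ x in Ioi z, s ^ s * x ^ (-t - 1) := by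
        refine setIntegral_mono_on (integrableOn_Ioi_rpow_mul_exp_neg _ hz)
          ((integrableOn_Ioi_rpow_of_lt htail hz).const_mul _) measurableSet_Ioi fun x hx => ?_
        have hx_pos : 0 < x := hz.trans hx
        calc x ^ (s - t - 1) * exp (-x) = x ^ s * exp (-x) * x ^ (-t - 1) := by
              rw [show s - t - 1 = s + (-t - 1) by ring, rpow_add hx_pos]
              ring
          _ ≤ s ^ s * x ^ (-t - 1) := by
              gcongr
              exact rpow_mul_exp_neg_le hs hx_pos.le
    _ = s ^ s * (z ^ (-t) / t) := by
        rw [integral_const_mul, integral_Ioi_rpow_of_lt htail hz, sub_add_cancel, neg_div_neg_eq]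

end IncompleteGamma

section SeriesExpansion

variable {μ a ν ρ z : ℝ}

lemma rpow_mul_rpow_add_mul_sub_one {x : ℝ} (ha : 0 ≤ a) (hx : 0 < x) (μ ν r : ℝ) :
    a ^ r * x ^ (μ + ν * r - 1) = x ^ (μ - 1) * (a * x ^ ν) ^ r := by
  rw [mul_rpow ha (by positivity), ← rpow_mul hx.le,
    show μ + ν * r - 1 = μ - 1 + ν * r by ring, rpow_add hx]
  ring

lemma one_add_rpow_le {y : ℝ} (hy : 0 ≤ y) (r : ℝ) :
    (1 + y) ^ r ≤ 2 ^ |r| * (1 + y ^ |r|) := by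
  calc (1 + y) ^ r ≤ (1 + y) ^ |r| :=
        rpow_le_rpow_of_exponent_le (by linarith) (le_abs_self r)
    _ ≤ (2 * max 1 y) ^ |r| := by
        gcongr
        linarith [le_max_left 1 y, le_max_right 1 y]
    _ = 2 ^ |r| * max 1 y ^ |r| := mul_rpow zero_le_two (by positivity)
    _ ≤ 2 ^ |r| * (1 + y ^ |r|) := by
        have hpow : 0 ≤ y ^ |r| := by positivity
        gcongr
        rcases max_cases 1 y with ⟨h, -⟩ | ⟨h, -⟩ <;> rw [h]
        · rw [one_rpow]
          linarith
        · linarith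

lemma integrableOn_rpow_mul_one_add_mul_rpow_mul_exp_neg (hμ : 0 < μ) (ha : 0 ≤ a) (hν : 0 ≤ ν)
    (ρ : ℝ) :
    IntegrableOn (fun x => x ^ (μ - 1) * (1 + a * x ^ ν) ^ ρ * exp (-x)) (Ioi 0) := by
  have hdom := ((integrableOn_Ioi_zero_rpow_sub_one_mul_exp_neg hμ).add
    ((integrableOn_Ioi_zero_rpow_sub_one_mul_exp_neg
      (s := μ + ν * |ρ|) (by positivity)).const_mul (a ^ |ρ|))).const_mul (2 ^ |ρ|)
  refine hdom.mono' (by fun_prop) ?_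
  filter_upwards [ae_restrict_mem measurableSet_Ioi] with x hx
  have hx_pos : 0 < x := hx
  rw [norm_of_nonneg (by positivity)]
  calc x ^ (μ - 1) * (1 + a * x ^ ν) ^ ρ * exp (-x)
      ≤ x ^ (μ - 1) * (2 ^ |ρ| * (1 + (a * x ^ ν) ^ |ρ|)) * exp (-x) := by
        gcongr
        exact one_add_rpow_le (by positivity) ρ
    _ = 2 ^ |ρ| * (x ^ (μ - 1) * exp (-x) + a ^ |ρ| * (x ^ (μ + ν * |ρ| - 1) * exp (-x))) := by
        linear_combination
          -(2 ^ |ρ| * exp (-x)) * rpow_mul_rpow_add_mul_sub_one ha hx_pos μ ν |ρ|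

lemma pow_mul_lowerIncGamma_le (hμ : 0 < μ) (ha : 0 ≤ a) (hν : 0 < ν) (hz : 0 < z)
    (haz : a * z ^ ν ≤ 1) (n : ℕ) :
    a ^ n * lowerIncGamma (μ + ν * n) z ≤ z ^ μ / min μ ν / (n + 1) := by
  have hmin : min μ ν * (n + 1) ≤ μ + ν * n := by
    nlinarith [min_le_left μ ν, min_le_right μ ν, (n.cast_nonneg : (0 : ℝ) ≤ n)]
  calc a ^ n * lowerIncGamma (μ + ν * n) z
      ≤ a ^ n * (z ^ (μ + ν * n) / (μ + ν * n)) := by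
        gcongr
        exact lowerIncGamma_le (by positivity) hz.le
    _ = (a * z ^ ν) ^ n * z ^ μ / (μ + ν * n) := by
        rw [rpow_add hz, rpow_mul_natCast hz.le, mul_pow]
        ring
    _ ≤ 1 * z ^ μ / (min μ ν * (n + 1)) := by
        gcongr
        exact pow_le_one₀ (by positivity) haz
    _ = z ^ μ / min μ ν / (n + 1) := by rw [one_mul, div_div]

lemma rpow_sub_mul_upperIncGamma_le (hμ : 0 < μ) (ha : 0 < a) (hν : 0 < ν) (hρ : -1 < ρ)
    (hz : 0 < z) (haz : 1 ≤ a * z ^ ν) (n : ℕ) :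
    a ^ (ρ - n) * upperIncGamma (μ + ν * (ρ - n)) z ≤
      a ^ (ρ + 1) * (μ + ν * (ρ + 1)) ^ (μ + ν * (ρ + 1)) / ν / (n + 1) := by
  set σ := μ + ν * (ρ + 1)
  have hσ : 0 < σ := add_pos hμ (mul_pos hν (by linarith))
  have hsplit : μ + ν * (ρ - n) = σ - ν * (n + 1) := by ring
  have hscale : a ^ (ρ - n) * z ^ (-(ν * (n + 1))) = a ^ (ρ + 1) * ((a * z ^ ν) ^ (n + 1))⁻¹ := by
    rw [show ρ - n = ρ + 1 - ((n + 1 : ℕ) : ℝ) by push_cast; ring, rpow_sub ha, rpow_natCast,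
      rpow_neg hz.le, ← Nat.cast_add_one, rpow_mul_natCast hz.le, mul_pow, mul_inv]
    ring
  calc a ^ (ρ - n) * upperIncGamma (μ + ν * (ρ - n)) z
      ≤ a ^ (ρ - n) * (σ ^ σ * (z ^ (-(ν * (n + 1))) / (ν * (n + 1)))) := by
        rw [hsplit]
        gcongr
        exact upperIncGamma_sub_le hσ (by positivity) hz
    _ = a ^ (ρ + 1) * ((a * z ^ ν) ^ (n + 1))⁻¹ * σ ^ σ / (ν * (n + 1)) := by
        rw [← hscale]
        ring
    _ ≤ a ^ (ρ + 1) * 1 * σ ^ σ / (ν * (n + 1)) := by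
        gcongr
        exact inv_le_one_of_one_le₀ (one_le_pow₀ haz)
    _ = a ^ (ρ + 1) * σ ^ σ / ν / (n + 1) := by rw [mul_one, div_div]

lemma hasSum_choose_mul_pow_mul_rpow_mul_exp_neg {x : ℝ} (μ ρ : ℝ) (ha : 0 ≤ a) (hx : 0 < x)
    (hax : a * x ^ ν < 1) :
    HasSum (fun n : ℕ => Ring.choose ρ n * (a ^ n * (x ^ (μ + ν * n - 1) * exp (-x))))
      (x ^ (μ - 1) * (1 + a * x ^ ν) ^ ρ * exp (-x)) := by
  have habs : |a * x ^ ν| < 1 := by rwa [abs_of_nonneg (by positivity)]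
  rw [mul_right_comm]
  refine ((hasSum_choose_mul_pow ρ habs).mul_left (x ^ (μ - 1) * exp (-x))).congr_fun fun n => ?_
  have hterm := rpow_mul_rpow_add_mul_sub_one ha hx μ ν n
  rw [rpow_natCast, rpow_natCast] at hterm
  linear_combination Ring.choose ρ n * exp (-x) * hterm

lemma hasSum_choose_mul_rpow_sub_mul_rpow_mul_exp_neg {x : ℝ} (μ ρ : ℝ) (ha : 0 ≤ a) (hx : 0 < x)
    (hax : 1 < a * x ^ ν) :
    HasSum
      (fun n : ℕ => Ring.choose ρ n * (a ^ (ρ - n) * (x ^ (μ + ν * (ρ - n) - 1) * exp (-x))))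
      (x ^ (μ - 1) * (1 + a * x ^ ν) ^ ρ * exp (-x)) := by
  rw [mul_right_comm]
  refine ((hasSum_choose_mul_rpow_sub ρ hax).mul_left
    (x ^ (μ - 1) * exp (-x))).congr_fun fun n => ?_
  linear_combination
    Ring.choose ρ n * exp (-x) * rpow_mul_rpow_add_mul_sub_one ha hx μ ν (ρ - n)

lemma hasSum_choose_mul_lowerIncGamma (hμ : 0 < μ) (ha : 0 < a) (hν : 0 < ν) (hρ : -1 < ρ)
    (hz : 0 < z) (haz : a * z ^ ν ≤ 1) :
    HasSum (fun n : ℕ => Ring.choose ρ n * (a ^ n * lowerIncGamma (μ + ν * n) z))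
      (∫ x in Ioc 0 z, x ^ (μ - 1) * (1 + a * x ^ ν) ^ ρ * exp (-x)) := by
  have hsum := summable_abs_choose_mul hρ
    (fun n => mul_nonneg (pow_nonneg ha.le n) (lowerIncGamma_nonneg (μ + ν * n) z))
    (pow_mul_lowerIncGamma_le hμ ha.le hν hz haz)
  have hterm (n : ℕ) : a ^ n * lowerIncGamma (μ + ν * n) z =
      ∫ x in Ioc 0 z, a ^ n * (x ^ (μ + ν * n - 1) * exp (-x)) := (integral_const_mul _ _).symm
  simp only [hterm] at hsum ⊢
  refine hasSum_mul_integral_of_nonneg (fun n => ?_) (fun n => ?_) hsum ?_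
  · exact ((integrableOn_Ioi_zero_rpow_sub_one_mul_exp_neg (by positivity)).mono_set
      Ioc_subset_Ioi_self).const_mul _
  · filter_upwards [ae_restrict_mem measurableSet_Ioc] with x hx
    have hx_pos : 0 < x := hx.1
    positivity
  · filter_upwards [ae_restrict_mem measurableSet_Ioc,
      ae_restrict_of_ae (Measure.ae_ne volume z)] with x hx hxz
    have hx_pos : 0 < x := hx.1
    have hx_lt : x < z := hx.2.lt_of_ne hxz
    have hax : a * x ^ ν < a * z ^ ν := by gcongr
    exact hasSum_choose_mul_pow_mul_rpow_mul_exp_neg μ ρ ha.le hx_pos (hax.trans_le haz)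

lemma hasSum_choose_mul_upperIncGamma (hμ : 0 < μ) (ha : 0 < a) (hν : 0 < ν) (hρ : -1 < ρ)
    (hz : 0 < z) (haz : 1 ≤ a * z ^ ν) :
    HasSum (fun n : ℕ =>
        Ring.choose ρ n * (a ^ (ρ - n) * upperIncGamma (μ + ν * (ρ - n)) z))
      (∫ x in Ioi z, x ^ (μ - 1) * (1 + a * x ^ ν) ^ ρ * exp (-x)) := by
  have hsum := summable_abs_choose_mul hρ
    (fun n => mul_nonneg (rpow_nonneg ha.le _) (upperIncGamma_nonneg (μ + ν * (ρ - n)) hz.le))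
    (rpow_sub_mul_upperIncGamma_le hμ ha hν hρ hz haz)
  have hterm (n : ℕ) : a ^ (ρ - n) * upperIncGamma (μ + ν * (ρ - n)) z =
      ∫ x in Ioi z, a ^ (ρ - n) * (x ^ (μ + ν * (ρ - n) - 1) * exp (-x)) :=
    (integral_const_mul _ _).symm
  simp only [hterm] at hsum ⊢
  refine hasSum_mul_integral_of_nonneg (fun n => ?_) (fun n => ?_) hsum ?_
  · exact (integrableOn_Ioi_rpow_mul_exp_neg _ hz).const_mul _
  · filter_upwards [ae_restrict_mem measurableSet_Ioi] with x hx
    have hx_pos : 0 < x := hz.trans hx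
    positivity
  · filter_upwards [ae_restrict_mem measurableSet_Ioi] with x hx
    have hzx : z < x := hx
    have hax : a * z ^ ν < a * x ^ ν := by gcongr
    exact hasSum_choose_mul_rpow_sub_mul_rpow_mul_exp_neg μ ρ ha.le (hz.trans hzx)
      (haz.trans_lt hax)

end SeriesExpansion

theorem I_integral_series_general (μ a ν ρ : ℝ) (hμ : 0 < μ) (ha : 0 < a) (hν : 0 < ν)
    (hρ : -1 < ρ) :
    HasSum (fun n : ℕ =>
      ((-1 : ℝ) ^ n * poch (-ρ) n / (n.factorial : ℝ)) *
        (a ^ n * lowerIncGamma (μ + ν * n) (a ^ (-1 / ν)) +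
         a ^ (ρ - n) * upperIncGamma (μ + ν * (ρ - n)) (a ^ (-1 / ν))))
      (∫ x in Ioi (0 : ℝ), x ^ (μ - 1) * (1 + a * x ^ ν) ^ ρ * Real.exp (-x)) := by
  set z : ℝ := a ^ (-1 / ν) with hz_def
  have hz : 0 < z := by positivity
  have haz : a * z ^ ν = 1 := by
    rw [hz_def, ← rpow_mul ha.le, div_mul_cancel₀ _ hν.ne', rpow_neg_one, mul_inv_cancel₀ ha.ne']
  have hint := integrableOn_rpow_mul_one_add_mul_rpow_mul_exp_neg hμ ha.le hν.le ρ
  rw [← Ioc_union_Ioi_eq_Ioi hz.le,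
    setIntegral_union (Ioc_disjoint_Ioi le_rfl) measurableSet_Ioi
      (hint.mono_set Ioc_subset_Ioi_self) (hint.mono_set (Ioi_subset_Ioi hz.le))]
  simpa only [← choose_eq_neg_one_pow_mul_poch_div_factorial, mul_add] using
    (hasSum_choose_mul_lowerIncGamma hμ ha hν hρ hz haz.le).add
      (hasSum_choose_mul_upperIncGamma hμ ha hν hρ hz haz.ge)

/-- Series expansion of `I_μ(a, ν, ρ) = ∫₀^∞ x^(μ-1)(1+ax^ν)^ρ e^(-x) dx`
in terms of lower and upper incomplete Gamma functions. -/
theorem I_integral_series (μ a ν ρ : ℝ) (hμ : 0 < μ) (ha : 0 < a) (hν : 0 < ν) (hρ : 0 < ρ)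
    (hnotnat : ∀ (ℓ : ℕ) (m : ℕ), 0 < m → ρ + ((ℓ : ℝ) + μ) / ν ≠ (m : ℝ)) :
    HasSum (fun n : ℕ =>
      ((-1 : ℝ) ^ n * poch (-ρ) n / (n.factorial : ℝ)) *
        (a ^ n * lowerIncGamma (μ + ν * n) (a ^ (-1 / ν)) +
         a ^ (ρ - n) * upperIncGamma (μ + ν * (ρ - n)) (a ^ (-1 / ν))))
      (∫ x in Ioi (0 : ℝ), x ^ (μ - 1) * (1 + a * x ^ ν) ^ ρ * Real.exp (-x)) := by
  exact I_integral_series_general μ a ν ρ hμ ha hν (by linarith)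
end
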